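/- arXiv:2507.10828 — 2 statements merged into one kernel-verified Lean document; each statement's English description precedes it below -/
import Mathlib

section
/- Let n ≥ 2 and d ≥ 0 be integers. If S ⊆ [n]^∞ is a d-maximal set that contains no 1-ball, then S is finite and |S| ≤ (2n)^d. -/
/-- Hamming distance between infinite words over `Fin n`, as an extended natural number. -/
noncomputable def hDist (n : ℕ) (a b : ℕ → Fin n) : ℕ∞ := {i | a i ≠ b i}.encard

/-- The `r`-ball around `a`. -/
def hBall (n : ℕ) (a : ℕ → Fin n) (r : ℕ) : Set (ℕ → Fin n) := {x | hDist n x a ≤ (r : ℕ∞)}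

/-- `S` is `d`-maximal: it has diameter `d` and any point within distance `d`
of all of `S` already belongs to `S`. -/
def IsDMaximal (n d : ℕ) (S : Set (ℕ → Fin n)) : Prop :=
  (∀ a ∈ S, ∀ b ∈ S, hDist n a b ≤ (d : ℕ∞)) ∧
  (∃ a ∈ S, ∃ b ∈ S, hDist n a b = (d : ℕ∞)) ∧
  (∀ x : ℕ → Fin n, (∀ s ∈ S, hDist n x s ≤ (d : ℕ∞)) → x ∈ S)

/-- `S` contains an `r`-ball. -/
def ContainsBall (n : ℕ) (S : Set (ℕ → Fin n)) (r : ℕ) : Prop :=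
  ∃ a, hBall n a r ⊆ S

theorem hd_symm (n : ℕ) (a b : ℕ → Fin n) : hDist n a b = hDist n b a := by
  unfold hDist
  congr 1
  ext i
  exact ne_comm

theorem hd_tri (n : ℕ) (a b c : ℕ → Fin n) : hDist n a c ≤ hDist n a b + hDist n b c := by
  unfold hDist
  refine le_trans (Set.encard_le_encard ?_) (Set.encard_union_le _ _)
  intro i hi
  by_contra h
  simp only [Set.mem_union, Set.mem_setOf_eq, not_or, not_not] at h hi
  exact hi (h.1.trans h.2)

theorem hd_card (n : ℕ) (a b : ℕ → Fin n) (T : Finset ℕ) (hT : ∀ i, i ∈ T ↔ a i ≠ b i) :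
    hDist n a b = (T.card : ℕ∞) := by
  unfold hDist
  have : {i | a i ≠ b i} = (T : Set ℕ) := by
    ext i
    simp [hT i]
  rw [this, Set.encard_coe_eq_coe_finsetCard]

theorem hd_fin (n d : ℕ) (a b : ℕ → Fin n) (h : hDist n a b ≤ (d : ℕ∞)) :
    ∃ T : Finset ℕ, (∀ i, i ∈ T ↔ a i ≠ b i) ∧ T.card ≤ d := by
  have hf : {i | a i ≠ b i}.Finite := Set.finite_of_encard_le_coe h
  have h1 : ∀ i, i ∈ hf.toFinset ↔ a i ≠ b i := by simp
  refine ⟨hf.toFinset, h1, ?_⟩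
  rw [hd_card n a b _ h1] at h
  exact_mod_cast h

theorem hd_wide (n d : ℕ) (S : Set (ℕ → Fin n))
    (hmax : IsDMaximal n d S) (hball : ¬ ContainsBall n S 1) (w : ℕ → Fin n) :
    ∃ b ∈ S, (d : ℕ∞) ≤ hDist n w b := by
  by_contra hcon
  push Not at hcon
  apply hball
  refine ⟨w, fun x hx => hmax.2.2 x fun s hs => ?_⟩
  have h1 : hDist n x w ≤ 1 := by simpa [hBall] using hx
  calc hDist n x s ≤ hDist n x w + hDist n w s := hd_tri n x w s
    _ ≤ 1 + hDist n w s := by gcongr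
    _ = hDist n w s + 1 := add_comm _ _
    _ ≤ d := Order.add_one_le_of_lt (hcon s hs)

/-- weights -/
def wt (n : ℕ) (p q v : Fin n) : ℕ := if v = p then 0 else if v = q then 2 else 1

theorem wt_sum (n : ℕ) (p q : Fin n) (h : p ≠ q) : ∑ v, wt n p q v = n := by
  have h1 : ∀ v, wt n p q v + (if v = p then 1 else 0) = 1 + (if v = q then 1 else 0) := by
    intro v
    unfold wt
    by_cases h1 : v = p
    · subst h1; simp [h]
    · by_cases h2 : v = q
      · subst h2; simp [h1]
      · simp [h1, h2]
  have h2 := Finset.sum_congr (rfl : (Finset.univ : Finset (Fin n)) = Finset.univ) (fun v _ => h1 v)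
  simp only [Finset.sum_add_distrib] at h2
  simp at h2
  exact h2

/-- Estimate for a single word. -/
theorem hd_single (n d e k m : ℕ) (a b w x : ℕ → Fin n) (K A X : Finset ℕ)
    (hK : ∀ i, i ∈ K ↔ w i ≠ a i) (hA : ∀ i, i ∈ A ↔ a i ≠ b i)
    (hX : ∀ i, i ∈ X ↔ a i ≠ x i) (hXc : X.card = k + m) (hk : K.card = k)
    (hxw : ∀ i ∈ K, x i = w i)
    (hwb : (A \ K).card + (K.filter (fun i => w i ≠ b i)).card = d + e)
    (hxb : hDist n x b ≤ d) :
    m + e ≤ ∑ i ∈ A \ K, wt n (a i) (b i) (x i) := by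
  set κ := K.filter (fun i => w i ≠ b i) with hκ
  set U1 := (A \ K).filter (fun i => x i = b i) with hU1
  set U0 := (A \ K).filter (fun i => x i ≠ b i) with hU0
  set U2 := (A \ K).filter (fun i => x i ≠ b i ∧ x i ≠ a i) with hU2
  set T := X \ (K ∪ A) with hT
  have e1 : U1.card + U0.card = (A \ K).card := Finset.card_filter_add_card_filter_not _
  have e2 : κ.card + U0.card + T.card ≤ d := by
    have : hDist n x b = ((κ ∪ U0 ∪ T).card : ℕ∞) := by
      apply hd_card
      intro i
      have := hK i; have := hA i; have := hX i; have := hxw i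
      simp only [hκ, hU0, hT, Finset.mem_union, Finset.mem_filter, Finset.mem_sdiff]
      grind
    rw [this] at hxb
    have h2 : (κ ∪ U0 ∪ T).card ≤ d := by exact_mod_cast hxb
    rw [Finset.card_union_of_disjoint, Finset.card_union_of_disjoint] at h2
    · exact h2
    · rw [Finset.disjoint_left]; intro i; simp only [hκ, hU0, Finset.mem_filter, Finset.mem_sdiff]; tauto
    · rw [Finset.disjoint_left]; intro i
      simp only [hκ, hU0, hT, Finset.mem_union, Finset.mem_filter, Finset.mem_sdiff]; tauto
  have e3 : X.card ≤ K.card + U1.card + U2.card + T.card := by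
    have : X ⊆ K ∪ U1 ∪ U2 ∪ T := by
      intro i
      have := hK i; have := hA i; have := hX i
      simp only [hU1, hU2, hT, Finset.mem_union, Finset.mem_filter, Finset.mem_sdiff]
      grind
    refine (Finset.card_le_card this).trans ?_
    refine (Finset.card_union_le _ _).trans ?_
    gcongr
    refine (Finset.card_union_le _ _).trans ?_
    gcongr
    exact Finset.card_union_le _ _
  have e4 : ∑ i ∈ A \ K, wt n (a i) (b i) (x i) = 2 * U1.card + U2.card := by
    rw [hU1, hU2, Finset.card_filter, Finset.card_filter, Finset.mul_sum, ← Finset.sum_add_distrib]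
    refine Finset.sum_congr rfl fun i hi => ?_
    have := hA i
    simp only [Finset.mem_sdiff] at hi
    unfold wt
    grind
  omega

theorem hd_main (n d j : ℕ) (S : Set (ℕ → Fin n))
    (hmax : IsDMaximal n d S) (hball : ¬ ContainsBall n S 1) (a : ℕ → Fin n) (ha : a ∈ S)
    (hj : j ≤ d) (F : Finset (ℕ → Fin n)) (hF : ∀ x ∈ F, x ∈ S ∧ hDist n a x = (j : ℕ∞)) (m : ℕ) :
    ∀ (K : Finset ℕ) (w : ℕ → Fin n), (∀ i, i ∈ K ↔ w i ≠ a i) → K.card + m = j →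
      2 ^ m * (F.filter (fun x => ∀ i ∈ K, x i = w i)).card
        ≤ n ^ m * (2 * d - K.card).choose m := by
  have hset : ∀ x ∈ F, ∃ X : Finset ℕ, (∀ i, i ∈ X ↔ a i ≠ x i) ∧ X.card = j := by
    intro x hx
    obtain ⟨X, hX, -⟩ := hd_fin n j a x (hF x hx).2.le
    refine ⟨X, hX, ?_⟩
    have := (hd_card n a x X hX).symm.trans (hF x hx).2
    exact_mod_cast this
  induction m with
  | zero =>
    intro K w hK hc
    simp only [pow_zero, one_mul, Nat.choose_zero_right]
    rw [Finset.card_le_one]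
    have key : ∀ x ∈ F.filter (fun x => ∀ i ∈ K, x i = w i), x = w := by
      intro x hx
      rw [Finset.mem_filter] at hx
      obtain ⟨X, hX, hXc⟩ := hset x hx.1
      have hsub : K ⊆ X := by
        intro i hi
        have := hx.2 i hi
        rw [hX, this]
        exact ((hK i).1 hi).symm
      have hKX : K = X := Finset.eq_of_subset_of_card_le hsub (by omega)
      funext i
      by_cases hi : i ∈ K
      · exact hx.2 i hi
      · have h1 : a i = x i := by
          by_contra h
          exact hi (hKX ▸ (hX i).2 h)
        have h2 : w i = a i := by
          by_contra h
          exact hi ((hK i).2 h)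
        rw [h2, h1]
    intro x hx y hy
    rw [key x hx, key y hy]
  | succ m ih =>
    intro K w hK hc
    obtain ⟨b, hb, hwb⟩ := hd_wide n d S hmax hball w
    obtain ⟨A, hA, hAc⟩ := hd_fin n d a b (hmax.1 a ha b hb)
    set κ := K.filter (fun i => w i ≠ b i) with hκ
    have h1 : d ≤ (A \ K).card + κ.card := by
      have : hDist n w b = (((A \ K) ∪ κ).card : ℕ∞) := by
        apply hd_card
        intro i
        have := hK i; have := hA i
        simp only [hκ, Finset.mem_union, Finset.mem_filter, Finset.mem_sdiff]
        grind
      rw [this] at hwb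
      have h2 : d ≤ ((A \ K) ∪ κ).card := by exact_mod_cast hwb
      exact h2.trans (Finset.card_union_le _ _)
    obtain ⟨e, he⟩ := Nat.exists_eq_add_of_le h1
    have h2 : (A \ K).card + K.card ≤ d + κ.card := by
      have q1 : (A \ K).card + (A ∩ K).card = A.card := Finset.card_sdiff_add_card_inter A K
      have q2 : K ⊆ (A ∩ K) ∪ κ := by
        intro i
        have := hK i; have := hA i
        simp only [hκ, Finset.mem_union, Finset.mem_filter, Finset.mem_inter]
        grind
      have q3 := (Finset.card_le_card q2).trans (Finset.card_union_le _ _)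
      omega
    set N := F.filter (fun x => ∀ i ∈ K, x i = w i) with hN
    set M := n ^ m * (2 * d - (K.card + 1)).choose m with hM
    have h3 : N.card * (m + 1 + e) ≤ ∑ x ∈ N, ∑ i ∈ A \ K, wt n (a i) (b i) (x i) := by
      rw [← smul_eq_mul]
      refine Finset.card_nsmul_le_sum _ _ _ ?_
      intro x hx
      rw [hN, Finset.mem_filter] at hx
      obtain ⟨X, hX, hXc⟩ := hset x hx.1
      exact hd_single n d e K.card (m+1) a b w x K A X hK hA hX (by omega) rfl hx.2 he
        (hmax.1 x (hF x hx.1).1 b hb)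
    have h4 : 2 ^ m * ∑ x ∈ N, ∑ i ∈ A \ K, wt n (a i) (b i) (x i) ≤ (A \ K).card * (n * M) := by
      rw [Finset.sum_comm, Finset.mul_sum, ← smul_eq_mul ((A \ K).card)]
      refine Finset.sum_le_card_nsmul _ _ _ ?_
      intro i hi
      rw [Finset.mem_sdiff] at hi
      have hab : a i ≠ b i := (hA i).1 hi.1
      have hwi : w i = a i := by
        by_contra h
        exact hi.2 ((hK i).2 h)
      have g1 : ∑ x ∈ N, wt n (a i) (b i) (x i)
          = ∑ v, (N.filter (fun x => x i = v)).card * wt n (a i) (b i) v := by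
        rw [← Finset.sum_fiberwise N (fun x => x i)]
        refine Finset.sum_congr rfl fun v _ => ?_
        rw [Finset.sum_congr rfl (g := fun _ => wt n (a i) (b i) v), Finset.sum_const, smul_eq_mul]
        intro x hx
        rw [Finset.mem_filter] at hx
        rw [hx.2]
      rw [g1, Finset.mul_sum]
      have g2 : ∀ v, 2 ^ m * ((N.filter (fun x => x i = v)).card * wt n (a i) (b i) v)
          ≤ M * wt n (a i) (b i) v := by
        intro v
        by_cases hv : v = a i
        · simp [wt, hv]
        · rw [← mul_assoc]
          refine Nat.mul_le_mul_right _ ?_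
          have := ih (insert i K) (Function.update w i v) (by
            intro l
            have := hK l
            by_cases hl : l = i
            · subst hl; simp [hv]
            · simp [hl, this]) (by rw [Finset.card_insert_of_notMem hi.2]; omega)
          rw [Finset.card_insert_of_notMem hi.2] at this
          refine le_trans (Nat.mul_le_mul_left _ (Finset.card_le_card ?_)) this
          intro x hx
          rw [Finset.mem_filter, hN, Finset.mem_filter] at hx
          rw [Finset.mem_filter]
          refine ⟨hx.1.1, ?_⟩
          intro l hl
          by_cases hli : l = i
          · subst hli; simp [hx.2]
          · have : l ∈ K := by
              rcases Finset.mem_insert.1 hl with h | h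
              · exact absurd h hli
              · exact h
            simp [hli, hx.1.2 l this]
      calc _ ≤ ∑ v, M * wt n (a i) (b i) v := Finset.sum_le_sum fun v _ => g2 v
        _ = n * M := by rw [← Finset.mul_sum, wt_sum n _ _ hab, mul_comm]
    -- arithmetic
    obtain ⟨r, hr⟩ : ∃ r, 2 * d - K.card = r + 1 := ⟨2 * d - K.card - 1, by omega⟩
    have hr' : 2 * d - (K.card + 1) = r := by omega
    rw [hr'] at hM
    rw [hr]
    have hB : 2 * (A \ K).card ≤ r + 1 + e := by omega
    have hmr : m + 1 ≤ r + 1 := by omega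
    have hch : (r + 1) * r.choose m = (r + 1).choose (m + 1) * (m + 1) :=
      Nat.add_one_mul_choose_eq r m
    have h5 : 2 ^ m * N.card * (m + 1 + e) ≤ (A \ K).card * (n * M) := by
      calc _ = 2 ^ m * (N.card * (m + 1 + e)) := by ring
        _ ≤ _ := (Nat.mul_le_mul_left _ h3).trans h4
    have h6 : (r + 1 + e) * (m + 1) ≤ (r + 1) * (m + 1 + e) := by nlinarith
    have h7 : (2 ^ (m + 1) * N.card) * ((m + 1 + e) * (m + 1))
        ≤ (n ^ (m + 1) * (r + 1).choose (m + 1)) * ((m + 1 + e) * (m + 1)) := by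
      calc (2 ^ (m + 1) * N.card) * ((m + 1 + e) * (m + 1))
          = 2 * (m + 1) * (2 ^ m * N.card * (m + 1 + e)) := by ring
        _ ≤ 2 * (m + 1) * ((A \ K).card * (n * M)) := Nat.mul_le_mul_left _ h5
        _ = (2 * (A \ K).card) * ((m + 1) * (n * M)) := by ring
        _ ≤ (r + 1 + e) * ((m + 1) * (n * M)) := Nat.mul_le_mul_right _ hB
        _ = ((r + 1 + e) * (m + 1)) * (n * M) := by ring
        _ ≤ ((r + 1) * (m + 1 + e)) * (n * M) := Nat.mul_le_mul_right _ h6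
        _ = n ^ (m + 1) * (m + 1 + e) * ((r + 1) * r.choose m) := by rw [hM]; ring
        _ = _ := by rw [hch]; ring
    exact Nat.le_of_mul_le_mul_right h7 (by positivity)

theorem hd_bound (n d : ℕ) (hn : 2 ≤ n) (S : Set (ℕ → Fin n))
    (hmax : IsDMaximal n d S) (hball : ¬ ContainsBall n S 1)
    (F : Finset (ℕ → Fin n)) (hF : ∀ x ∈ F, x ∈ S) : F.card ≤ (2 * n) ^ d := by
  obtain ⟨a, ha, -⟩ := hmax.2.1
  classical
  have h1 : ∀ j ∈ Finset.range (d + 1),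
      2 ^ d * (F.filter (fun x => hDist n a x = (j : ℕ∞))).card ≤ n ^ d * (2 * d).choose j := by
    intro j hj
    have hj' : j ≤ d := by simpa [Nat.lt_succ_iff] using hj
    have := hd_main n d j S hmax hball a ha hj' (F.filter (fun x => hDist n a x = (j : ℕ∞)))
      (by intro x hx; rw [Finset.mem_filter] at hx; exact ⟨hF x hx.1, hx.2⟩) j ∅ a (by simp) (by simp)
    simp only [Finset.notMem_empty, false_imp_iff, implies_true, Finset.filter_true,
      Finset.card_empty, Nat.sub_zero] at this
    obtain ⟨c, rfl⟩ := Nat.exists_eq_add_of_le hj'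
    calc _ = 2 ^ c * (2 ^ j * (F.filter (fun x => hDist n a x = (j : ℕ∞))).card) := by ring
      _ ≤ n ^ c * (n ^ j * (2 * (j + c)).choose j) :=
        Nat.mul_le_mul (Nat.pow_le_pow_left hn c) this
      _ = _ := by ring
  have h2 : F.card ≤ ∑ j ∈ Finset.range (d + 1), (F.filter (fun x => hDist n a x = (j : ℕ∞))).card := by
    have hs : F ⊆ (Finset.range (d + 1)).biUnion
        (fun j => F.filter (fun x => hDist n a x = (j : ℕ∞))) := by
      intro x hx
      obtain ⟨T, hT, hTc⟩ := hd_fin n d a x (hmax.1 a ha x (hF x hx))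
      rw [Finset.mem_biUnion]
      exact ⟨T.card, by simp; omega, by rw [Finset.mem_filter]; exact ⟨hx, hd_card n a x T hT⟩⟩
    exact (Finset.card_le_card hs).trans Finset.card_biUnion_le
  have h3 : ∑ j ∈ Finset.range (d + 1), (2 * d).choose j ≤ 2 ^ (2 * d) := by
    rw [← Nat.sum_range_choose]
    exact Finset.sum_le_sum_of_subset (Finset.range_mono (by omega))
  have h4 : 2 ^ d * F.card ≤ 2 ^ d * (2 * n) ^ d := by
    calc 2 ^ d * F.card ≤ 2 ^ d * ∑ j ∈ Finset.range (d + 1), (F.filter (fun x => hDist n a x = (j : ℕ∞))).card :=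
          Nat.mul_le_mul_left _ h2
      _ ≤ ∑ j ∈ Finset.range (d + 1), n ^ d * (2 * d).choose j := by
          rw [Finset.mul_sum]; exact Finset.sum_le_sum h1
      _ = n ^ d * ∑ j ∈ Finset.range (d + 1), (2 * d).choose j := by rw [Finset.mul_sum]
      _ ≤ n ^ d * 2 ^ (2 * d) := Nat.mul_le_mul_left _ h3
      _ = 2 ^ d * (2 * n) ^ d := by rw [mul_pow, two_mul, pow_add]; ring
  exact Nat.le_of_mul_le_mul_left h4 (by positivity)

theorem stmt12 (n d : ℕ) (hn : 2 ≤ n) (S : Set (ℕ → Fin n))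
    (hmax : IsDMaximal n d S) (hball : ¬ ContainsBall n S 1) :
    S.Finite ∧ S.ncard ≤ (2 * n) ^ d := by
  have key := hd_bound n d hn S hmax hball
  have hfin : S.Finite := by
    by_contra hinf
    obtain ⟨t, ht, hc⟩ := (show S.Infinite from hinf).exists_subset_card_eq ((2 * n) ^ d + 1)
    have := key t (fun x hx => ht hx)
    omega
  refine ⟨hfin, ?_⟩
  rw [Set.ncard_eq_toFinset_card S hfin]
  exact key _ (by simp)
end

section
/- Let k ≥ 1 be an integer, let S_even = {∅} ∪ {A ⊆ {1, …, 3k} : |A| = 2k}, and let S_odd = {A ⊆ {1, …, 3k+1} : A ∩ {1, …, 3k} ∈ S_even}, viewed as families of subsets of ℕ with distance dist(A,B) = |A Δ B|. Then S_odd has diameter 2k+1 and is (2k+1)-maximal: for every B ⊆ ℕ, if |B Δ A| ≤ 2k+1 for all A ∈ S_odd, then B ∈ S_odd. -/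
/-- Hamming distance between subsets of `ℕ`: the (possibly infinite) cardinality
of their symmetric difference. -/
noncomputable def setDist (A B : Set ℕ) : ℕ∞ := (symmDiff A B).encard

/-- The family `S_even = {∅} ∪ {A ⊆ {1,…,3k} : |A| = 2k}`. -/
def Seven (k : ℕ) : Set (Set ℕ) :=
  {∅} ∪ {A : Set ℕ | A ⊆ Set.Icc 1 (3 * k) ∧ A.ncard = 2 * k}

/-- The family `S_odd = {A ⊆ {1,…,3k+1} : A ∩ {1,…,3k} ∈ S_even}`. -/
def Sodd (k : ℕ) : Set (Set ℕ) :=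
  {A : Set ℕ | A ⊆ Set.Icc 1 (3 * k + 1) ∧ A ∩ Set.Icc 1 (3 * k) ∈ Seven k}

lemma mem_Sodd_coe (k : ℕ) (A : Finset ℕ) : (A : Set ℕ) ∈ Sodd k ↔
    A ⊆ Finset.Icc 1 (3 * k + 1) ∧
      ((A ∩ Finset.Icc 1 (3 * k)).card = 0 ∨ (A ∩ Finset.Icc 1 (3 * k)).card = 2 * k) := by
  have e : (A : Set ℕ) ∩ Set.Icc 1 (3 * k) = ((A ∩ Finset.Icc 1 (3 * k) : Finset ℕ) : Set ℕ) := by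
    push_cast; rfl
  unfold Sodd Seven
  rw [Set.mem_setOf_eq, e, Set.mem_union, Set.mem_setOf_eq, Set.ncard_coe_finset,
    Set.mem_singleton_iff, Finset.coe_eq_empty, Finset.card_eq_zero, ← Finset.coe_Icc,
    ← Finset.coe_Icc, Finset.coe_subset, Finset.coe_subset]
  have : A ∩ Finset.Icc 1 (3 * k) ⊆ Finset.Icc 1 (3 * k) := Finset.inter_subset_right
  tauto

lemma setDist_coe (A B : Finset ℕ) : setDist A B = ((symmDiff A B).card : ℕ∞) := by
  unfold setDist
  rw [← Finset.coe_symmDiff, Set.encard_coe_eq_coe_finsetCard]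

lemma card_symm (A B : Finset ℕ) :
    (symmDiff A B).card + 2 * (A ∩ B).card = A.card + B.card := by
  have h1 : (symmDiff A B).card = (A \ B).card + (B \ A).card := by
    rw [symmDiff_def]
    exact Finset.card_union_of_disjoint disjoint_sdiff_sdiff
  have h2 := Finset.card_sdiff_add_card_inter A B
  have h3 := Finset.card_sdiff_add_card_inter B A
  rw [Finset.inter_comm] at h3
  omega

lemma finite_of_mem_Sodd {k : ℕ} {A : Set ℕ} (h : A ∈ Sodd k) : A.Finite :=
  (Set.finite_Icc _ _).subset h.1

theorem stmt16 (k : ℕ) (hk : 1 ≤ k) :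
    (∀ A ∈ Sodd k, ∀ B ∈ Sodd k, setDist A B ≤ ((2 * k + 1 : ℕ) : ℕ∞)) ∧
    (∃ A ∈ Sodd k, ∃ B ∈ Sodd k, setDist A B = ((2 * k + 1 : ℕ) : ℕ∞)) ∧
    (∀ B : Set ℕ, (∀ A ∈ Sodd k, setDist B A ≤ ((2 * k + 1 : ℕ) : ℕ∞)) → B ∈ Sodd k) := by
  have hI : (Finset.Icc 1 (3 * k)).card = 3 * k := by simp
  have hE : ((∅ : Finset ℕ) : Set ℕ) ∈ Sodd k := by
    rw [mem_Sodd_coe]; simp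
  refine ⟨?_, ?_, ?_⟩
  · intro A hA B hB
    obtain ⟨A, rfl⟩ := (finite_of_mem_Sodd hA).exists_finset_coe
    obtain ⟨B, rfl⟩ := (finite_of_mem_Sodd hB).exists_finset_coe
    rw [mem_Sodd_coe] at hA hB
    rw [setDist_coe, Nat.cast_le]
    obtain ⟨hA1, hA2⟩ := hA
    obtain ⟨hB1, hB2⟩ := hB
    have hsub : symmDiff A B ⊆ insert (3 * k + 1)
        (symmDiff (A ∩ Finset.Icc 1 (3 * k)) (B ∩ Finset.Icc 1 (3 * k))) := by
      intro x hx
      have h1 := @hA1 x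
      have h2 := @hB1 x
      simp only [Finset.mem_symmDiff, Finset.mem_insert, Finset.mem_inter, Finset.mem_Icc] at *
      by_cases hx' : x = 3 * k + 1
      · exact Or.inl hx'
      · right
        rcases hx with ⟨ha, hb⟩ | ⟨ha, hb⟩
        · have := h1 ha
          exact Or.inl ⟨⟨ha, by omega⟩, fun h => hb h.1⟩
        · have := h2 ha
          exact Or.inr ⟨⟨ha, by omega⟩, fun h => hb h.1⟩
    have h3 := Finset.card_le_card hsub
    have h4 := Finset.card_insert_le (3 * k + 1)
        (symmDiff (A ∩ Finset.Icc 1 (3 * k)) (B ∩ Finset.Icc 1 (3 * k)))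
    have h5 := card_symm (A ∩ Finset.Icc 1 (3 * k)) (B ∩ Finset.Icc 1 (3 * k))
    have h6 := Finset.card_union_add_card_inter
      (A ∩ Finset.Icc 1 (3 * k)) (B ∩ Finset.Icc 1 (3 * k))
    have h7 := Finset.card_le_card (Finset.union_subset
      (Finset.inter_subset_right : A ∩ Finset.Icc 1 (3 * k) ⊆ _)
      (Finset.inter_subset_right : B ∩ Finset.Icc 1 (3 * k) ⊆ _))
    omega
  · refine ⟨_, hE, ((insert (3 * k + 1) (Finset.Icc 1 (2 * k)) : Finset ℕ) : Set ℕ), ?_, ?_⟩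
    · rw [mem_Sodd_coe]
      have e : insert (3 * k + 1) (Finset.Icc 1 (2 * k)) ∩ Finset.Icc 1 (3 * k)
          = Finset.Icc 1 (2 * k) := by
        ext x; simp only [Finset.mem_insert, Finset.mem_inter, Finset.mem_Icc]; omega
      rw [e]
      refine ⟨?_, by simp⟩
      intro x; simp only [Finset.mem_insert, Finset.mem_Icc]; omega
    · rw [setDist_coe]
      congr 1
      have := card_symm ∅ (insert (3 * k + 1) (Finset.Icc 1 (2 * k)))
      rw [Finset.card_insert_of_notMem (by simp only [Finset.mem_Icc]; omega)] at this
      simpa using this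
  · intro B hB
    have hfin : B.Finite := by
      have h := hB _ hE
      unfold setDist at h
      rw [Finset.coe_empty, ← Set.bot_eq_empty, symmDiff_bot] at h
      exact Set.finite_of_encard_le_coe h
    obtain ⟨B, rfl⟩ := hfin.exists_finset_coe
    have H : ∀ A ⊆ Finset.Icc 1 (3 * k), (A.card = 0 ∨ A.card = 2 * k) →
        (symmDiff (B.erase (3 * k + 1)) A).card ≤ 2 * k := by
      intro A hA hc
      have hcA : 3 * k + 1 ∉ A := fun h => by
        have := Finset.mem_Icc.1 (hA h); omega
      obtain ⟨A', hA', hs⟩ : ∃ A' : Finset ℕ, (A' : Set ℕ) ∈ Sodd k ∧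
          symmDiff B A' = insert (3 * k + 1) (symmDiff (B.erase (3 * k + 1)) A) := by
        by_cases hcB : 3 * k + 1 ∈ B
        · refine ⟨A, ?_, ?_⟩
          · rw [mem_Sodd_coe, Finset.inter_eq_left.2 hA]
            exact ⟨hA.trans (Finset.Icc_subset_Icc_right (by omega)), hc⟩
          · ext x
            simp only [Finset.mem_symmDiff, Finset.mem_insert, Finset.mem_erase]
            by_cases hx : x = 3 * k + 1
            · subst hx; tauto
            · tauto
        · refine ⟨insert (3 * k + 1) A, ?_, ?_⟩
          · rw [mem_Sodd_coe, Finset.insert_inter_of_notMem (by simp),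
              Finset.inter_eq_left.2 hA]
            refine ⟨Finset.insert_subset (by simp)
              (hA.trans (Finset.Icc_subset_Icc_right (by omega))), hc⟩
          · ext x
            simp only [Finset.mem_symmDiff, Finset.mem_insert, Finset.mem_erase]
            by_cases hx : x = 3 * k + 1
            · subst hx; tauto
            · tauto
      have h := hB _ hA'
      rw [setDist_coe, Nat.cast_le, hs, Finset.card_insert_of_notMem] at h
      · omega
      · simp [Finset.mem_symmDiff, hcA]
    set B' := B.erase (3 * k + 1) with hB'
    have hBsub : B ⊆ insert (3 * k + 1) B' := by
      intro x hx
      by_cases h : x = 3 * k + 1 <;> simp [hB', h, hx]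
    have hint : B ∩ Finset.Icc 1 (3 * k) = B' ∩ Finset.Icc 1 (3 * k) := by
      ext x; simp only [hB', Finset.mem_inter, Finset.mem_erase, Finset.mem_Icc]
      constructor
      · rintro ⟨a, b⟩; exact ⟨⟨by omega, a⟩, b⟩
      · rintro ⟨a, b⟩; exact ⟨a.2, b⟩
    set X := B' ∩ Finset.Icc 1 (3 * k) with hX
    have hXI : X ⊆ Finset.Icc 1 (3 * k) := Finset.inter_subset_right
    have hXB : X ⊆ B' := Finset.inter_subset_left
    have hXc := Finset.card_le_card hXB
    have hXc2 := Finset.card_sdiff_add_card_eq_card hXI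
    have key : X = B' ∧ (X.card = 0 ∨ X.card = 2 * k) := by
      by_cases hx : X.card ≤ k
      · obtain ⟨A, hA1, hA2⟩ := Finset.exists_subset_card_eq
          (show 2 * k ≤ (Finset.Icc 1 (3 * k) \ X).card by omega)
        have h1 := H A (hA1.trans Finset.sdiff_subset) (Or.inr hA2)
        have h2 := card_symm B' A
        have h3 : B' ∩ A = ∅ := by
          ext x
          have := @hA1 x
          simp only [hX, Finset.mem_sdiff, Finset.mem_inter] at this ⊢
          simp only [Finset.notMem_empty, iff_false]
          tauto
        rw [h3, Finset.card_empty] at h2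
        exact ⟨Finset.eq_of_subset_of_card_le hXB (by omega), by omega⟩
      · obtain ⟨A, hA0, hA1, hA2⟩ := Finset.exists_subsuperset_card_eq
          (Finset.sdiff_subset : Finset.Icc 1 (3 * k) \ X ⊆ _)
          (show (Finset.Icc 1 (3 * k) \ X).card ≤ 2 * k by omega) (by omega)
        have h0 := H ∅ (by simp) (by simp)
        have h0' := card_symm B' ∅
        simp only [Finset.inter_empty, Finset.card_empty] at h0'
        have h1 := H A hA1 (Or.inr hA2)
        have h2 := card_symm B' A
        have h3 : B' ∩ A = A \ (Finset.Icc 1 (3 * k) \ X) := by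
          ext x
          have := @hA1 x
          simp only [hX, Finset.mem_sdiff, Finset.mem_inter] at this ⊢
          tauto
        have h4 := Finset.card_sdiff_add_card_eq_card hA0
        rw [h3] at h2
        exact ⟨Finset.eq_of_subset_of_card_le hXB (by omega), by omega⟩
    rw [mem_Sodd_coe, hint]
    refine ⟨hBsub.trans (Finset.insert_subset (by simp) ?_), key.2⟩
    rw [← key.1]
    exact hXI.trans (Finset.Icc_subset_Icc_right (by omega))
end
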